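/- Let A = diag(κ₁,…,κₙ) be a real diagonal n×n matrix, with Newton transformations P_k. Then for every 0 ≤ k ≤ n−1, P_k is the diagonal matrix diag(μ_{1,k},…,μ_{n,k}), where μ_{i,k} = (−1)^k · ∑_{i₁<⋯<i_k, i_j ≠ i} κ_{i₁}⋯κ_{i_k} = (−1)^k · σ_k((κ_l)_{l ≠ i}), the k-th elementary symmetric polynomial of the κ_l with the i-th entry omitted, multiplied by (−1)^k. -/

import Mathlib

/-- The `k`-th elementary symmetric function of `κ₁, …, κₙ`:
`S_k = σ_k(κ₁,…,κₙ)` (with `S_0 = 1`). -/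
noncomputable def Ssym (n : ℕ) (κ : Fin n → ℝ) (k : ℕ) : ℝ :=
  ∑ t ∈ (Finset.univ : Finset (Fin n)).powersetCard k, ∏ i ∈ t, κ i

/-- The `k`-th mean curvature `H_k`, defined by `binom(n,k)·H_k = (−1)^k·S_k`
(so `H_k = 0` for `k > n`). -/
noncomputable def Hmc (n : ℕ) (κ : Fin n → ℝ) (k : ℕ) : ℝ :=
  (-1 : ℝ) ^ k * Ssym n κ k / (n.choose k : ℝ)

/-- The Newton transformations, defined inductively by `P_0 = I` and
`P_k = binom(n,k)·H_k·I + A·P_{k−1}`. -/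
noncomputable def NewtonT (n : ℕ) (κ : Fin n → ℝ) (A : Matrix (Fin n) (Fin n) ℝ) :
    ℕ → Matrix (Fin n) (Fin n) ℝ
  | 0 => 1
  | k + 1 => ((n.choose (k + 1) : ℝ) * Hmc n κ (k + 1)) • (1 : Matrix (Fin n) (Fin n) ℝ)
      + A * NewtonT n κ A k

/-- The `k`-th elementary symmetric polynomial of the values `κ l` for `l` in the
finite index set `s`. -/
noncomputable def esymmOn {n : ℕ} (s : Finset (Fin n)) (k : ℕ) (κ : Fin n → ℝ) : ℝ :=
  ∑ t ∈ s.powersetCard k, ∏ i ∈ t, κ i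

section Esymm

theorem esymm_cons_succ {R : Type*} [CommSemiring R] (a : R) (s : Multiset R) (k : ℕ) :
    (a ::ₘ s).esymm (k + 1) = s.esymm (k + 1) + a * s.esymm k := by
  simp only [Multiset.esymm, Multiset.powersetCard_cons, Multiset.map_add, Multiset.sum_add,
    Multiset.map_map, Function.comp_def, Multiset.prod_cons, Multiset.sum_map_mul_left]

variable {n : ℕ} (κ : Fin n → ℝ)

theorem esymmOn_eq_esymm (s : Finset (Fin n)) (k : ℕ) :
    esymmOn s k κ = (s.val.map κ).esymm k :=
  (Finset.esymm_map_val κ s k).symm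

theorem esymmOn_insert_succ {s : Finset (Fin n)} {i : Fin n} (hi : i ∉ s) (k : ℕ) :
    esymmOn (insert i s) (k + 1) κ = esymmOn s (k + 1) κ + κ i * esymmOn s k κ := by
  simp only [esymmOn_eq_esymm, Finset.insert_val_of_notMem hi, Multiset.map_cons,
    esymm_cons_succ]

theorem Ssym_succ_eq_esymmOn_erase (i : Fin n) (k : ℕ) :
    Ssym n κ (k + 1) = esymmOn (Finset.univ.erase i) (k + 1) κ
      + κ i * esymmOn (Finset.univ.erase i) k κ := by
  rw [← esymmOn_insert_succ κ (Finset.notMem_erase i _),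
    Finset.insert_erase (Finset.mem_univ i), Ssym, esymmOn]

theorem Ssym_eq_zero_of_lt {k : ℕ} (hk : n < k) : Ssym n κ k = 0 := by
  rw [Ssym, Finset.powersetCard_eq_empty.2 (by rwa [Finset.card_fin]), Finset.sum_empty]

end Esymm

section NewtonT

variable {n : ℕ} (κ : Fin n → ℝ)

theorem choose_mul_Hmc (k : ℕ) : (n.choose k : ℝ) * Hmc n κ k = (-1) ^ k * Ssym n κ k := by
  rcases le_or_gt k n with hk | hk
  · exact mul_div_cancel₀ _ (Nat.cast_ne_zero.2 (Nat.choose_pos hk).ne')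
  · rw [Nat.choose_eq_zero_of_lt hk, Ssym_eq_zero_of_lt κ hk, Nat.cast_zero, zero_mul, mul_zero]

theorem NewtonT_succ (A : Matrix (Fin n) (Fin n) ℝ) (k : ℕ) :
    NewtonT n κ A (k + 1) = ((-1) ^ (k + 1) * Ssym n κ (k + 1)) • 1 + A * NewtonT n κ A k := by
  rw [NewtonT, choose_mul_Hmc]

-- From `k = n` on both sides vanish; `P_n = 0` is the Cayley–Hamilton theorem for `diag(κ)`.
theorem stmt5_general (k : ℕ) :
    NewtonT n κ (Matrix.diagonal κ) k
      = Matrix.diagonal (fun i => (-1 : ℝ) ^ k * esymmOn (Finset.univ.erase i) k κ) := by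
  induction k with
  | zero => simp [NewtonT, esymmOn]
  | succ k ih =>
    rw [NewtonT_succ, ih, Matrix.diagonal_mul_diagonal, Matrix.smul_one_eq_diagonal,
      Matrix.diagonal_add]
    congr 1 with i
    rw [Ssym_succ_eq_esymmOn_erase κ i]
    ring

end NewtonT

/-- For `A = diag(κ₁,…,κₙ)` a real diagonal `n×n` matrix and `0 ≤ k ≤ n−1`, the
Newton transformation `P_k` is the diagonal matrix `diag(μ_{1,k},…,μ_{n,k})` with
`μ_{i,k} = (−1)^k · σ_k((κ_l)_{l ≠ i})`. -/
theorem stmt5 {n : ℕ} (hn : 1 ≤ n) (κ : Fin n → ℝ) (k : ℕ) (hk : k ≤ n - 1) :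
    NewtonT n κ (Matrix.diagonal κ) k
      = Matrix.diagonal (fun i => (-1 : ℝ) ^ k * esymmOn (Finset.univ.erase i) k κ) :=
  stmt5_general κ k
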